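/- For every finite field F_q with q elements and all integers j ≥ 1 and n ≥ 1: Σ_{f ∈ M_n} Λ_j(f) = q^n · (n^j − (n−1)^j). -/

import Mathlib

open Polynomial

/-- The von Mangoldt function on `F_q[T]`: `Λ(f) = deg P` if `f = c·P^k` with `c ≠ 0`,
`P` monic irreducible and `k ≥ 1`, and `Λ(f) = 0` otherwise. -/
noncomputable def polyVM {F : Type*} [Field F] (f : F[X]) : ℕ :=
  sSup {m : ℕ | ∃ (c : F) (P : F[X]) (k : ℕ),
    c ≠ 0 ∧ P.Monic ∧ Irreducible P ∧ 1 ≤ k ∧ f = C c * P ^ k ∧ m = P.natDegree}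

/- The higher-order von Mangoldt functions: `Λ_0(f) = 1` iff `f` is a nonzero constant,
`Λ_1 = Λ`, and `Λ_j(f) = Σ'_{d ∣ f} Λ_{j-1}(d) Λ(f/d) + Λ_{j-1}(f)·deg f` for `j ≥ 2`,
the sum being over monic divisors `d` of `f`. -/
open Classical in
noncomputable def polyVMJ {F : Type*} [Field F] : ℕ → F[X] → ℕ
  | 0 => fun f => if f ≠ 0 ∧ f.natDegree = 0 then 1 else 0
  | 1 => fun f => polyVM f
  | (j + 2) => fun f =>
      (∑ᶠ d ∈ {d : F[X] | d.Monic ∧ d ∣ f}, polyVMJ (j + 1) d * polyVM (f / d))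
        + polyVMJ (j + 1) f * f.natDegree

/-!
For `g : F[T] → ℕ` put `G(u) = ∑ g(f) u ^ deg f`, the sum running over monic `f`. Dirichlet
convolution of functions becomes multiplication of series, and multiplication by the degree becomes
the derivation `θ = u d/du`. With `L_j` the series of `Λ_j` and `Z` that of the constant `1`, unique
factorization gives `L_1 Z = θ Z`, and the recursion reads `L_{j+1} = L_j L_1 + θ L_j`. Hence
`L_{j+1} Z = L_j θ Z + (θ L_j) Z = θ (L_j Z)`, so that `L_j Z = θ ^ j Z`. As `Z = 1 / (1 - q u)`,
the coefficients of `θ ^ j Z` are `n ^ j q ^ n`, and multiplication by `1 - q u` yields those of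
`L_j`.
-/

lemma finsum_mem_mul_finsum_mem {α β A : Type*} [NonUnitalNonAssocSemiring A] {s : Set α}
    {t : Set β} (hs : s.Finite) (ht : t.Finite) (g : α → A) (h : β → A) :
    (∑ᶠ a ∈ s, g a) * (∑ᶠ b ∈ t, h b) = ∑ᶠ p ∈ s ×ˢ t, g p.1 * h p.2 := by
  rw [finsum_mem_eq_finite_toFinset_sum _ hs, finsum_mem_eq_finite_toFinset_sum _ ht,
    finsum_mem_eq_finite_toFinset_sum _ (hs.prod ht), ← Set.Finite.toFinset_prod hs ht,
    Finset.sum_mul_sum, Finset.sum_product]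

section MonicPolynomials

/-- A monic polynomial of degree `n` is determined by its `n` lower coefficients, which are
arbitrary. -/
noncomputable def monicNatDegreeEqEquiv {R : Type*} [Ring R] [Nontrivial R] (n : ℕ) :
    {f : R[X] | f.Monic ∧ f.natDegree = n} ≃ (Fin n → R) :=
  (monicEquivDegreeLT n).trans (degreeLTEquiv R n).toEquiv

lemma finite_setOf_monic_natDegree_eq {R : Type*} [Ring R] [Nontrivial R] [Finite R] (n : ℕ) :
    {f : R[X] | f.Monic ∧ f.natDegree = n}.Finite :=
  Set.finite_coe_iff.mp (.of_equiv _ (monicNatDegreeEqEquiv n).symm)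

lemma ncard_setOf_monic_natDegree_eq {R : Type*} [Ring R] [Nontrivial R] (n : ℕ) :
    {f : R[X] | f.Monic ∧ f.natDegree = n}.ncard = Nat.card R ^ n := by
  rw [← Nat.card_coe_set_eq, Nat.card_congr (monicNatDegreeEqEquiv n), Nat.card_fun, Nat.card_fin]

lemma eq_of_monic_of_prime_dvd_pow {R : Type*} [CommRing R] [IsDomain R] {P Q : R[X]} {k : ℕ}
    (hPm : P.Monic) (hP : Prime P) (hQm : Q.Monic) (hQ : Irreducible Q) (h : P ∣ Q ^ k) : P = Q :=
  eq_of_monic_of_associated hPm hQm (hP.irreducible.associated_of_dvd hQ (hP.dvd_of_dvd_pow h))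

lemma finite_setOf_monic_dvd {F : Type*} [Field F] {f : F[X]} (hf : f ≠ 0) :
    {d : F[X] | d.Monic ∧ d ∣ f}.Finite :=
  Set.finite_coe_iff.mp (@Finite.of_fintype _ (fintypeSubtypeMonicDvd f hf))

end MonicPolynomials

section VonMangoldt

open UniqueFactorizationMonoid

variable {F : Type*} [Field F]

lemma polyVM_pow {P : F[X]} (hPm : P.Monic) (hP : Irreducible P) {k : ℕ} (hk : 1 ≤ k) :
    polyVM (P ^ k) = P.natDegree := by
  suffices h : {m : ℕ | ∃ (c : F) (Q : F[X]) (l : ℕ), c ≠ 0 ∧ Q.Monic ∧ Irreducible Q ∧ 1 ≤ l ∧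
      P ^ k = C c * Q ^ l ∧ m = Q.natDegree} = {P.natDegree} by
    rw [polyVM, h, csSup_singleton]
  ext m
  constructor
  · rintro ⟨c, Q, l, hc, hQm, hQ, -, h, rfl⟩
    have hPQ : P ∣ Q ^ l :=
      (isUnit_C.2 hc.isUnit).dvd_mul_left.1 (h ▸ dvd_pow_self P (by lia))
    rw [eq_of_monic_of_prime_dvd_pow hPm hP.prime hQm hQ hPQ, Set.mem_singleton_iff]
  · rintro rfl
    exact ⟨1, P, k, one_ne_zero, hPm, hP, hk, by rw [C_1, one_mul], rfl⟩

lemma exists_eq_pow_of_polyVM_ne_zero {f : F[X]} (hf : f.Monic) (h : polyVM f ≠ 0) :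
    ∃ (P : F[X]) (k : ℕ), P.Monic ∧ Irreducible P ∧ 1 ≤ k ∧ f = P ^ k := by
  obtain ⟨-, c, P, k, -, hPm, hP, hk, rfl, -⟩ :=
    Set.nonempty_iff_ne_empty.2 fun hempty ↦ h ((congrArg sSup hempty).trans csSup_empty)
  have hc : c = 1 := by
    rw [← hf.leadingCoeff, leadingCoeff_mul, leadingCoeff_C, (hPm.pow k).leadingCoeff, mul_one]
  exact ⟨P, k, hPm, hP, hk, by rw [hc, C_1, one_mul]⟩

lemma bijOn_pow_support_polyVM (f : F[X]) :
    Set.BijOn (fun x : (_ : F[X]) × ℕ ↦ x.1 ^ x.2)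
      {x | x.1.Monic ∧ Irreducible x.1 ∧ 1 ≤ x.2 ∧ x.1 ^ x.2 ∣ f}
      ({d | d.Monic ∧ d ∣ f} ∩ Function.support polyVM) := by
  refine ⟨?_, ?_, ?_⟩
  · rintro ⟨P, k⟩ ⟨hPm, hP, hk, hdvd⟩
    refine ⟨⟨hPm.pow k, hdvd⟩, ?_⟩
    rw [Function.mem_support, polyVM_pow hPm hP hk]
    exact hP.natDegree_pos.ne'
  · rintro ⟨P, k⟩ ⟨hPm, hP, hk, -⟩ ⟨Q, l⟩ ⟨hQm, hQ, -, -⟩ (hPQ : P ^ k = Q ^ l)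
    obtain rfl : P = Q :=
      eq_of_monic_of_prime_dvd_pow hPm hP.prime hQm hQ (hPQ ▸ dvd_pow_self P (by lia))
    rw [pow_injective_of_not_isUnit hP.not_isUnit hP.ne_zero hPQ]
  · rintro d ⟨⟨hdm, hdvd⟩, hd⟩
    obtain ⟨P, k, hPm, hP, hk, rfl⟩ := exists_eq_pow_of_polyVM_ne_zero hdm hd
    exact ⟨⟨P, k⟩, ⟨hPm, hP, hk, hdvd⟩, rfl⟩

lemma pow_dvd_iff_le_count_normalizedFactors {M : Type*} [CommMonoidWithZero M]
    [NormalizationMonoid M] [UniqueFactorizationMonoid M] [DecidableEq M] {p a : M}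
    (hp : Irreducible p) (hnorm : normalize p = p) (ha : a ≠ 0) {k : ℕ} :
    p ^ k ∣ a ↔ k ≤ (normalizedFactors a).count p := by
  rw [pow_dvd_iff_le_emultiplicity, emultiplicity_eq_count_normalizedFactors hp ha, hnorm,
    Nat.cast_le]

lemma coe_sigma_Icc_count_normalizedFactors [DecidableEq F] {f : F[X]} (hf : f ≠ 0) :
    ((normalizedFactors f).toFinset.sigma fun P ↦ Finset.Icc 1 ((normalizedFactors f).count P) :
      Set ((_ : F[X]) × ℕ)) =
      {x | x.1.Monic ∧ Irreducible x.1 ∧ 1 ≤ x.2 ∧ x.1 ^ x.2 ∣ f} := by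
  ext ⟨P, k⟩
  simp only [Finset.mem_coe, Finset.mem_sigma, Multiset.mem_toFinset, Finset.mem_Icc,
    Polynomial.mem_normalizedFactors_iff hf, Set.mem_ofPred_eq]
  constructor
  · rintro ⟨⟨hP, hPm, -⟩, hk, hcount⟩
    exact ⟨hPm, hP, hk,
      (pow_dvd_iff_le_count_normalizedFactors hP hPm.normalize_eq_self hf).2 hcount⟩
  · rintro ⟨hPm, hP, hk, hdvd⟩
    exact ⟨⟨hP, hPm, (dvd_pow_self P (by lia)).trans hdvd⟩, hk,
      (pow_dvd_iff_le_count_normalizedFactors hP hPm.normalize_eq_self hf).1 hdvd⟩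

lemma sum_count_normalizedFactors_mul_natDegree [DecidableEq F] {f : F[X]} (hf : f ≠ 0) :
    ∑ P ∈ (normalizedFactors f).toFinset, (normalizedFactors f).count P * P.natDegree =
      f.natDegree :=
  calc ∑ P ∈ (normalizedFactors f).toFinset, (normalizedFactors f).count P * P.natDegree
      = ((normalizedFactors f).map natDegree).sum :=
        (Finset.sum_multiset_map_count _ _).symm
    _ = (normalizedFactors f).prod.natDegree :=
        (natDegree_multiset_prod _ (zero_notMem_normalizedFactors f)).symm
    _ = f.natDegree :=
        natDegree_eq_of_degree_eq (degree_eq_degree_of_associated (prod_normalizedFactors hf))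

lemma finsum_polyVM_monic_dvd {f : F[X]} (hf : f ≠ 0) :
    ∑ᶠ d ∈ {d : F[X] | d.Monic ∧ d ∣ f}, polyVM d = f.natDegree := by
  classical
  calc ∑ᶠ d ∈ {d : F[X] | d.Monic ∧ d ∣ f}, polyVM d
      = ∑ᶠ x ∈ {x : (_ : F[X]) × ℕ | x.1.Monic ∧ Irreducible x.1 ∧ 1 ≤ x.2 ∧ x.1 ^ x.2 ∣ f},
          x.1.natDegree := by
        rw [← finsum_mem_inter_support]
        exact (finsum_mem_eq_of_bijOn _ (bijOn_pow_support_polyVM f)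
          fun x ⟨hPm, hP, hk, _⟩ ↦ (polyVM_pow hPm hP hk).symm).symm
    _ = ∑ P ∈ (normalizedFactors f).toFinset,
          (normalizedFactors f).count P * P.natDegree := by
        rw [← coe_sigma_Icc_count_normalizedFactors hf, finsum_mem_coe_finset, Finset.sum_sigma]
        simp only [Finset.sum_const, Nat.card_Icc, Nat.add_sub_cancel, smul_eq_mul]
    _ = f.natDegree := sum_count_normalizedFactors_mul_natDegree hf

end VonMangoldt

open scoped PowerSeries

section EulerDerivation

variable {A : Type*} [CommSemiring A]

variable (A) in
/-- The derivation `θ = u d/du` of the ring of power series in `u`. -/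
noncomputable def eulerDerivation : Derivation A A⟦X⟧ A⟦X⟧ :=
  (PowerSeries.X : A⟦X⟧) • d⁄dX A

lemma coeff_eulerDerivation (φ : A⟦X⟧) (n : ℕ) :
    (eulerDerivation A φ).coeff n = φ.coeff n * n := by
  rw [eulerDerivation, Derivation.smul_apply, smul_eq_mul]
  cases n with
  | zero => rw [PowerSeries.coeff_zero_X_mul, Nat.cast_zero, mul_zero]
  | succ n => rw [PowerSeries.coeff_succ_X_mul, PowerSeries.coeff_derivative, Nat.cast_succ]

lemma coeff_iterate_eulerDerivation (φ : A⟦X⟧) (j n : ℕ) :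
    ((eulerDerivation A)^[j] φ).coeff n = φ.coeff n * n ^ j := by
  induction j with
  | zero => rw [Function.iterate_zero_apply, pow_zero, mul_one]
  | succ j ih =>
    rw [Function.iterate_succ_apply', coeff_eulerDerivation, ih, pow_succ, mul_assoc]

end EulerDerivation

section DegreeSeries

variable {R A : Type*} [Ring R]

/-- The generating function `∑ g(f) u ^ deg f`, over monic `f`, of a function `g` on `R[T]`. It is
meant for finite `R`; otherwise `∑ᶠ` may return the junk value `0` for a coefficient. -/
noncomputable def degreeSeries [Semiring A] (g : R[X] → A) : A⟦X⟧ :=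
  .mk fun n ↦ ∑ᶠ f ∈ {f : R[X] | f.Monic ∧ f.natDegree = n}, g f

variable (R A) in
/-- The zeta function `∑ q ^ (-s deg f)` of `R[T]`, over monic `f`, as a power series in
`u = q ^ (-s)`. -/
noncomputable def zetaSeries [Semiring A] : A⟦X⟧ :=
  degreeSeries (1 : R[X] → A)

lemma coeff_degreeSeries [Semiring A] (g : R[X] → A) (n : ℕ) :
    (degreeSeries g).coeff n = ∑ᶠ f ∈ {f : R[X] | f.Monic ∧ f.natDegree = n}, g f :=
  PowerSeries.coeff_mk _ _

lemma degreeSeries_congr [Semiring A] {g h : R[X] → A} (hgh : ∀ f : R[X], f.Monic → g f = h f) :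
    degreeSeries g = degreeSeries h := by
  ext n
  simp only [coeff_degreeSeries]
  exact finsum_mem_congr rfl fun f hf ↦ hgh f hf.1

variable [Nontrivial R] [Finite R]

lemma degreeSeries_add [Semiring A] (g h : R[X] → A) :
    degreeSeries (fun f ↦ g f + h f) = degreeSeries g + degreeSeries h := by
  ext n
  simp only [map_add, coeff_degreeSeries]
  exact finsum_mem_add_distrib (finite_setOf_monic_natDegree_eq n)

lemma degreeSeries_mul_natDegree [CommSemiring A] (g : R[X] → A) :
    degreeSeries (fun f ↦ g f * f.natDegree) = eulerDerivation A (degreeSeries g) := by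
  ext n
  rw [coeff_eulerDerivation, coeff_degreeSeries, coeff_degreeSeries,
    finsum_mem_mul' _ _ (finite_setOf_monic_natDegree_eq n)]
  exact finsum_mem_congr rfl fun f hf ↦ by rw [hf.2]

lemma coeff_zetaSeries [Semiring A] (n : ℕ) : (zetaSeries R A).coeff n = Nat.card R ^ n := by
  rw [zetaSeries, coeff_degreeSeries, ← Nat.cast_pow, ← ncard_setOf_monic_natDegree_eq n,
    ← finsum_one, Nat.cast_finsum_mem (finite_setOf_monic_natDegree_eq n)]
  exact finsum_mem_congr rfl fun _ _ ↦ Nat.cast_one.symm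

/-- The geometric series `1 / (1 - q u)`, written without subtraction. -/
lemma zetaSeries_eq_one_add [Semiring A] :
    zetaSeries R A = 1 + PowerSeries.C (Nat.card R : A) * (PowerSeries.X * zetaSeries R A) := by
  ext n
  rw [map_add, PowerSeries.coeff_C_mul, coeff_zetaSeries, PowerSeries.coeff_one]
  cases n with
  | zero => rw [PowerSeries.coeff_zero_X_mul, if_pos rfl, pow_zero, mul_zero, add_zero]
  | succ n =>
    rw [PowerSeries.coeff_succ_X_mul, coeff_zetaSeries, if_neg n.succ_ne_zero, pow_succ', zero_add]

lemma coeff_succ_mul_zetaSeries [CommSemiring A] (φ : A⟦X⟧) (n : ℕ) :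
    (φ * zetaSeries R A).coeff (n + 1) =
      φ.coeff (n + 1) + Nat.card R * (φ * zetaSeries R A).coeff n := by
  have h : φ * zetaSeries R A =
      φ + PowerSeries.C (Nat.card R : A) * (PowerSeries.X * (φ * zetaSeries R A)) := by
    conv_lhs => rw [zetaSeries_eq_one_add]
    ring
  conv_lhs => rw [h]
  rw [map_add, PowerSeries.coeff_C_mul, PowerSeries.coeff_succ_X_mul]

lemma coeff_degreeSeries_mul [Semiring A] (g h : R[X] → A) (n : ℕ) :
    (degreeSeries g * degreeSeries h).coeff n =
      ∑ᶠ p ∈ {p : R[X] × R[X] | p.1.Monic ∧ p.2.Monic ∧ p.1.natDegree + p.2.natDegree = n},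
        g p.1 * h p.2 := by
  have hfin (k : ℕ) := finite_setOf_monic_natDegree_eq (R := R) k
  simp only [PowerSeries.coeff_mul, coeff_degreeSeries, finsum_mem_mul_finsum_mem (hfin _) (hfin _)]
  rw [← finsum_mem_coe_finset, ← finsum_mem_biUnion _ (Finset.finite_toSet _)
    fun k _ ↦ (hfin k.1).prod (hfin k.2)]
  · refine finsum_mem_congr ?_ fun _ _ ↦ rfl
    ext ⟨d, e⟩
    simp only [Set.mem_iUnion, Set.mem_prod, Set.mem_ofPred_eq, exists_prop, Finset.mem_coe,
      Finset.HasAntidiagonal.mem_antidiagonal]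
    constructor
    · rintro ⟨⟨a, b⟩, hab, ⟨hd, rfl⟩, he, rfl⟩
      exact ⟨hd, he, hab⟩
    · rintro ⟨hd, he, hde⟩
      exact ⟨(d.natDegree, e.natDegree), hde, ⟨hd, rfl⟩, he, rfl⟩
  · intro k _ k' _ hkk'
    exact Set.disjoint_left.2 fun p hp hp' ↦
      hkk' (Prod.ext (hp.1.2.symm.trans hp'.1.2) (hp.2.2.symm.trans hp'.2.2))

end DegreeSeries

section DirichletConvolution

variable {F A : Type*} [Field F] [Semiring A]

/-- The Dirichlet convolution `f ↦ ∑ g(d) h(f / d)` over the monic divisors `d` of `f`. At `f = 0`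
the sum may be infinite, in which case its value is junk. -/
noncomputable def dirichletConv (g h : F[X] → A) (f : F[X]) : A :=
  ∑ᶠ d ∈ {d : F[X] | d.Monic ∧ d ∣ f}, g d * h (f / d)

lemma finite_setOf_monic_pairs_mul_eq {f : F[X]} (hf : f ≠ 0) :
    {p : F[X] × F[X] | p.1.Monic ∧ p.2.Monic ∧ p.1 * p.2 = f}.Finite := by
  refine ((finite_setOf_monic_dvd hf).prod (finite_setOf_monic_dvd hf)).subset ?_
  rintro ⟨d, e⟩ ⟨hd, he, rfl⟩
  exact ⟨⟨hd, dvd_mul_right d e⟩, ⟨he, dvd_mul_left e d⟩⟩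

lemma dirichletConv_eq_finsum_pairs (g h : F[X] → A) {f : F[X]} (hf : f.Monic) :
    dirichletConv g h f =
      ∑ᶠ p ∈ {p : F[X] × F[X] | p.1.Monic ∧ p.2.Monic ∧ p.1 * p.2 = f}, g p.1 * h p.2 := by
  refine (finsum_mem_eq_of_bijOn Prod.fst ⟨?_, ?_, ?_⟩ ?_).symm
  · rintro ⟨d, e⟩ ⟨hd, -, rfl⟩
    exact ⟨hd, dvd_mul_right d e⟩
  · rintro ⟨d, e⟩ ⟨hd, -, hde⟩ ⟨d', e'⟩ ⟨-, -, hde'⟩ (rfl : d = d')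
    exact Prod.ext rfl (mul_left_cancel₀ hd.ne_zero (hde.trans hde'.symm))
  · rintro d ⟨hd, e, rfl⟩
    exact ⟨(d, e), ⟨hd, hd.of_mul_monic_left hf, rfl⟩, rfl⟩
  · rintro ⟨d, e⟩ ⟨hd, -, rfl⟩
    rw [mul_div_cancel_left₀ e hd.ne_zero]

lemma coeff_degreeSeries_dirichletConv [Finite F] (g h : F[X] → A) (n : ℕ) :
    (degreeSeries (dirichletConv g h)).coeff n =
      ∑ᶠ p ∈ {p : F[X] × F[X] | p.1.Monic ∧ p.2.Monic ∧ p.1.natDegree + p.2.natDegree = n},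
        g p.1 * h p.2 := by
  rw [coeff_degreeSeries, finsum_mem_congr rfl fun f hf ↦ dirichletConv_eq_finsum_pairs g h hf.1,
    ← finsum_mem_biUnion _ (finite_setOf_monic_natDegree_eq n)
      fun f hf ↦ finite_setOf_monic_pairs_mul_eq hf.1.ne_zero]
  · refine finsum_mem_congr ?_ fun _ _ ↦ rfl
    ext ⟨d, e⟩
    simp only [Set.mem_iUnion, Set.mem_ofPred_eq, exists_prop]
    constructor
    · rintro ⟨f, ⟨-, rfl⟩, hd, he, rfl⟩
      exact ⟨hd, he, (hd.natDegree_mul he).symm⟩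
    · rintro ⟨hd, he, rfl⟩
      exact ⟨d * e, ⟨hd.mul he, hd.natDegree_mul he⟩, hd, he, rfl⟩
  · intro f _ f' _ hff'
    exact Set.disjoint_left.2 fun p hp hp' ↦ hff' (hp.2.2.symm.trans hp'.2.2)

lemma degreeSeries_dirichletConv [Finite F] (g h : F[X] → A) :
    degreeSeries (dirichletConv g h) = degreeSeries g * degreeSeries h := by
  ext n
  rw [coeff_degreeSeries_dirichletConv, coeff_degreeSeries_mul]

end DirichletConvolution

section HigherVonMangoldt

variable {F : Type*} [Field F]

lemma dirichletConv_polyVM_one {f : F[X]} (hf : f ≠ 0) :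
    dirichletConv polyVM 1 f = f.natDegree := by
  simp only [dirichletConv, Pi.one_apply, mul_one, finsum_polyVM_monic_dvd hf]

variable [Finite F]

lemma degreeSeries_polyVM_mul_zetaSeries :
    degreeSeries (polyVM (F := F)) * zetaSeries F ℕ = eulerDerivation ℕ (zetaSeries F ℕ) := by
  rw [zetaSeries, ← degreeSeries_dirichletConv, ← degreeSeries_mul_natDegree]
  refine degreeSeries_congr fun f hf ↦ ?_
  rw [dirichletConv_polyVM_one hf.ne_zero, Pi.one_apply, one_mul, Nat.cast_id]

lemma degreeSeries_polyVMJ_add_two (j : ℕ) :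
    degreeSeries (polyVMJ (F := F) (j + 2)) =
      degreeSeries (polyVMJ (F := F) (j + 1)) * degreeSeries (polyVM (F := F)) +
        eulerDerivation ℕ (degreeSeries (polyVMJ (F := F) (j + 1))) := by
  rw [← degreeSeries_dirichletConv, ← degreeSeries_mul_natDegree, ← degreeSeries_add]
  rfl

lemma degreeSeries_polyVMJ_mul_zetaSeries (j : ℕ) :
    degreeSeries (polyVMJ (F := F) (j + 1)) * zetaSeries F ℕ =
      (eulerDerivation ℕ)^[j + 1] (zetaSeries F ℕ) := by
  induction j with
  | zero => exact degreeSeries_polyVM_mul_zetaSeries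
  | succ j ih =>
    rw [Function.iterate_succ_apply', ← ih, Derivation.leibniz, degreeSeries_polyVMJ_add_two,
      ← degreeSeries_polyVM_mul_zetaSeries, smul_eq_mul, smul_eq_mul]
    ring

lemma coeff_degreeSeries_polyVMJ_mul_zetaSeries (j n : ℕ) :
    (degreeSeries (polyVMJ (F := F) (j + 1)) * zetaSeries F ℕ).coeff n =
      Nat.card F ^ n * n ^ (j + 1) := by
  rw [degreeSeries_polyVMJ_mul_zetaSeries, coeff_iterate_eulerDerivation, coeff_zetaSeries,
    Nat.cast_id, Nat.cast_id]

end HigherVonMangoldt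

/-- Equation (1.10) of Rodgers, "The covariance of almost-primes in F_q[T]":
`Σ_{f ∈ M_n} Λ_j(f) = q^n (n^j − (n−1)^j)`. -/
theorem sum_vonMangoldt_monic_eq {F : Type*} [Field F] [Fintype F]
    (j n : ℕ) (hj : 1 ≤ j) (hn : 1 ≤ n) :
    (∑ᶠ f ∈ {f : F[X] | f.Monic ∧ f.natDegree = n}, polyVMJ j f)
      = Fintype.card F ^ n * (n ^ j - (n - 1) ^ j) := by
  obtain ⟨j, rfl⟩ := Nat.exists_eq_add_of_le' hj
  obtain ⟨n, rfl⟩ := Nat.exists_eq_add_of_le' hn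
  have h := coeff_succ_mul_zetaSeries (R := F) (degreeSeries (polyVMJ (F := F) (j + 1))) n
  rw [coeff_degreeSeries_polyVMJ_mul_zetaSeries, coeff_degreeSeries_polyVMJ_mul_zetaSeries,
    coeff_degreeSeries, Nat.cast_id, ← mul_assoc, ← pow_succ'] at h
  rw [Nat.add_sub_cancel, Nat.mul_sub, Fintype.card_eq_nat_card, h, Nat.add_sub_cancel]
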